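/- Let K_6^{(3)} denote the complete 3-uniform hypergraph on 6 vertices. Then, for the semi-random hypergraph process with s = 3 and r = 2, τ^{(2)}_{P_{K_6^{(3)}}} ≤ 9/5. -/

import Mathlib

open Filter
open scoped ENNReal

namespace SemiRandomHypergraph

/-- The collection of `k`-element subsets of `Fin n`. -/
abbrev Col (n k : ℕ) := {A : Finset (Fin n) // A.card = k}

lemma col_nonempty {n k : ℕ} (h : k ≤ n) : Nonempty (Col n k) := by
  obtain ⟨t, -, ht⟩ :=
    Finset.exists_subset_card_eq (show k ≤ (Finset.univ : Finset (Fin n)).card by simpa using h)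
  exact ⟨⟨t, ht⟩⟩

/-- One round of the semi-random `(r,s)`-hypergraph process: the random `r`-set `U_t`
together with the player's reply, an `(s-r)`-set `V_t` (which may overlap `U_t`). -/
abbrev Step (n r s : ℕ) := Col n r × Col n (s - r)

/-- A strategy of the player: given the history so far (most recent round first) and the
current random `r`-set `U_t`, a probability distribution for the reply `V_t`. -/
def Strategy (n r s : ℕ) := List (Step n r s) → Col n r → PMF (Col n (s - r))

/-- The distribution of the history (most recent round first) after `t` rounds of the
semi-random hypergraph process played with strategy `S`. -/
noncomputable def historyPMF {n r s : ℕ} (h : Nonempty (Col n r)) (S : Strategy n r s) :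
    ℕ → PMF (List (Step n r s))
  | 0 => PMF.pure []
  | t + 1 =>
      (historyPMF h S t).bind fun hist =>
        (@PMF.uniformOfFintype (Col n r) _ h).bind fun U =>
          (S hist U).map fun W => (U, W) :: hist

/-- The multi-hypergraph `H_t^{(r,s)}` (recorded by its history `hist`; the edge created
in a round is the multiset `U_t + V_t`) contains a sub-hypergraph isomorphic to the
hypergraph with edge set `E`. -/
def ContainsCopy {V : Type*} {n r s : ℕ} (E : Finset (Finset V))
    (hist : List (Step n r s)) : Prop :=
  ∃ φ : V ↪ Fin n, ∀ e ∈ E, ∃ p ∈ hist,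
    Multiset.map (φ : V → Fin n) e.val = p.1.1.val + p.2.1.val

/-- The probability that after `t` rounds the multi-hypergraph `H_t^{(r,s)}` built with
strategy `S` contains a copy of the hypergraph with edge set `E`. -/
noncomputable def probContains {V : Type*} (n r s : ℕ) (E : Finset (Finset V))
    (S : Strategy n r s) (t : ℕ) : ℝ≥0∞ :=
  if h : r ≤ n then
    (historyPMF (col_nonempty h) S t).toOuterMeasure {hist | ContainsCopy E hist}
  else 0

/-- `τ^{(r)}_{P_G}(q, n)`: the least number of rounds needed so that some strategy makes
the probability of containing a copy of `G` at least `q` (`⊤` if impossible). -/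
noncomputable def tauQ {V : Type*} (r s : ℕ) (E : Finset (Finset V)) (q : ℝ≥0∞)
    (n : ℕ) : ℕ∞ :=
  ⨅ S : Strategy n r s,
    sInf {c : ℕ∞ | ∃ t : ℕ, c = (t : ℕ∞) ∧ q ≤ probContains n r s E S t}

/-- Logarithm on `ℕ∞`, with `log ⊤ = ⊤`, valued in `EReal`. -/
noncomputable def elog (m : ℕ∞) : EReal :=
  WithTop.recTopCoe ⊤ (fun t : ℕ => ((Real.log t : ℝ) : EReal)) m

/-- `τ^{(r)}_{P_G} = lim_{q→1⁻} limsup_{n→∞} ln(τ^{(r)}_{P_G}(q,n)) / ln n`; since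
`q ↦ limsup_n …` is non-decreasing, the limit as `q → 1⁻` equals the supremum over
`q ∈ (0,1)`. -/
noncomputable def tauExp {V : Type*} (r s : ℕ) (E : Finset (Finset V)) : EReal :=
  ⨆ q ∈ Set.Ioo (0 : ℝ≥0∞) 1,
    Filter.limsup
      (fun n : ℕ => elog (tauQ r s E q n) * (((Real.log n)⁻¹ : ℝ) : EReal)) atTop

/-- The hypergraph with edge set `E` is `d`-degenerate: every (induced, hence every)
sub-hypergraph has a vertex of degree at most `d`. -/
def Degen {V : Type*} [DecidableEq V] (E : Finset (Finset V)) (d : ℕ) : Prop :=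
  ∀ S : Finset V, S.Nonempty → ∃ v ∈ S, (E.filter fun e => v ∈ e ∧ e ⊆ S).card ≤ d

/-- The hypergraph with edge set `E` has degeneracy exactly `d`. -/
def DegeneracyEq {V : Type*} [DecidableEq V] (E : Finset (Finset V)) (d : ℕ) : Prop :=
  Degen E d ∧ ∀ d' : ℕ, Degen E d' → d ≤ d'

end SemiRandomHypergraph

/-!
Give each of the twenty triples of `K_6` a window of `L = ⌈K n ^ (9/5)⌉` rounds, in which the
player waits for a prescribed pair of the triple and completes it by the third vertex. A given
pair is drawn in a given window with probability `p ≈ 2 K n ^ (-1/5)`. Two vertices of the copy,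
the anchors, are fixed and the other four range over disjoint blocks of size `N ≈ n / 6`, so
that `N p ^ 5` tends to `16 K ^ 5 / 3` and the expected number `N ^ 4 p ^ 20` of copies all of
whose pairs are drawn is of constant order. Copies that agree in `j` non-anchor vertices have at
most `5 j` pairs in common, so this number has relative variance at most
`(1 + 1 / (N p ^ 5)) ^ 4 - 1`, which is small for large `K`.

In the first sixteen windows the third vertex is an anchor, so the player answers without
knowing which copy the pair belongs to. In the four late windows the player guesses a copy that
contains the current pair and whose early pairs have all been drawn. A complete copy survives
unless another copy shares one of its late pairs and also has all its early pairs drawn; the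
expected number of such pairs of copies is smaller by a factor of order `p ^ 2`, by Markov's
inequality a negligible contribution.
-/

namespace SemiRandomHypergraph

open scoped BigOperators Topology

section UniformExpectation

lemma expect_prod_pi {R K : Type*} [Fintype R] [DecidableEq R] {κ : R → Type*}
    [∀ i, Fintype (κ i)] [Semifield K] [CharZero K] (f : ∀ i, κ i → K) :
    𝔼 ω : ∀ i, κ i, ∏ i, f i (ω i) = ∏ i, 𝔼 a, f i a := by
  simp only [Fintype.expect_eq_sum_div_card, Finset.prod_div_distrib, Fintype.prod_sum,
    Fintype.card_pi, Nat.cast_prod]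

/-- Either `Z` is at least half the mean of `X` (Markov), or `X` deviates from its mean by at
least half of it (Chebyshev). -/
lemma dens_filter_le_of_imp_le {Ω : Type*} [Fintype Ω] [Nonempty Ω] {X Z : Ω → ℝ} {μ : ℝ}
    (hμ : 0 < μ) (hX : 𝔼 ω, X ω = μ) (hZ : ∀ ω, 0 ≤ Z ω) (B : Ω → Prop) [DecidablePred B]
    (hB : ∀ ω, B ω → X ω ≤ Z ω) :
    (({ω | B ω} : Finset Ω).dens : ℝ) ≤
      4 * ((𝔼 ω, X ω ^ 2) / μ ^ 2 - 1) + 2 * ((𝔼 ω, Z ω) / μ) := by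
  have pointwise (ω : Ω) : Set.indicator ({ω | B ω} : Finset Ω) (1 : Ω → ℝ) ω ≤
      4 / μ ^ 2 * (X ω ^ 2 - 2 * μ * X ω + μ ^ 2) + 2 / μ * Z ω := by
    have hdev : X ω ^ 2 - 2 * μ * X ω + μ ^ 2 = (X ω - μ) ^ 2 := by ring
    have hchebyshev : 0 ≤ 4 / μ ^ 2 * (X ω - μ) ^ 2 := by positivity
    have hmarkov : 0 ≤ 2 / μ * Z ω := mul_nonneg (by positivity) (hZ ω)
    rw [hdev]
    by_cases h : B ω
    · rw [Set.indicator_of_mem (by simpa using h), Pi.one_apply]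
      rcases le_total (μ / 2) (Z ω) with hlarge | hsmall
      · have : 1 ≤ 2 / μ * Z ω := by
          rw [div_mul_eq_mul_div, le_div_iff₀ hμ]
          linarith
        linarith
      · have : 1 ≤ 4 / μ ^ 2 * (X ω - μ) ^ 2 := by
          rw [div_mul_eq_mul_div, le_div_iff₀ (by positivity)]
          nlinarith [hB ω h]
        linarith
    · rw [Set.indicator_of_notMem (by simpa using h)]
      linarith
  calc (({ω | B ω} : Finset Ω).dens : ℝ)
      = 𝔼 ω, Set.indicator ({ω | B ω} : Finset Ω) (1 : Ω → ℝ) ω :=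
        (Finset.expect_indicator_one _).symm
    _ ≤ 𝔼 ω, (4 / μ ^ 2 * (X ω ^ 2 - 2 * μ * X ω + μ ^ 2) + 2 / μ * Z ω) :=
        Finset.expect_le_expect fun ω _ ↦ pointwise ω
    _ = 4 / μ ^ 2 * ((𝔼 ω, X ω ^ 2) - 2 * μ * μ + μ ^ 2) + 2 / μ * 𝔼 ω, Z ω := by
        simp only [Finset.expect_add_distrib, Finset.expect_sub_distrib, ← Finset.mul_expect, hX,
          Fintype.expect_const]
    _ = 4 * ((𝔼 ω, X ω ^ 2) / μ ^ 2 - 1) + 2 * ((𝔼 ω, Z ω) / μ) := by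
        field_simp
        ring

end UniformExpectation

section Hit

variable {P J : Type*}

/-- The indicator function of the event that the element `a` occurs among the samples `g`. -/
noncomputable def hit (a : P) (g : J → P) : ℝ := Set.indicator (Set.range g) 1 a

lemma hit_of_mem {a : P} {g : J → P} (h : a ∈ Set.range g) : hit a g = 1 :=
  Set.indicator_of_mem h _

lemma hit_of_notMem {a : P} {g : J → P} (h : a ∉ Set.range g) : hit a g = 0 :=
  Set.indicator_of_notMem h _

lemma hit_nonneg (a : P) (g : J → P) : 0 ≤ hit a g :=
  Set.indicator_nonneg (fun _ _ ↦ zero_le_one) a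

lemma hit_mul_self (a : P) (g : J → P) : hit a g * hit a g = hit a g := by
  by_cases h : a ∈ Set.range g
  · rw [hit_of_mem h, one_mul]
  · rw [hit_of_notMem h, zero_mul]

lemma hit_eq_one_sub_prod [Fintype J] [DecidableEq P] (a : P) (g : J → P) :
    hit a g = 1 - ∏ j, if g j = a then (0 : ℝ) else 1 := by
  by_cases h : a ∈ Set.range g
  · obtain ⟨j, hj⟩ := h
    rw [hit_of_mem ⟨j, hj⟩,
      Finset.prod_eq_zero (f := fun j ↦ if g j = a then (0 : ℝ) else 1) (Finset.mem_univ j)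
        (if_pos hj), sub_zero]
  · rw [hit_of_notMem h, Finset.prod_eq_one fun j _ ↦ if_neg fun hj ↦ h ⟨j, hj⟩, sub_self]

/-- The probability that `L` independent uniform samples from an `M`-element set contain a
given element. -/
noncomputable def hitProb (M L : ℕ) : ℝ := 1 - (1 - (M : ℝ)⁻¹) ^ L

lemma hitProb_le_one (M L : ℕ) : hitProb M L ≤ 1 :=
  sub_le_self _ (pow_nonneg (sub_nonneg.mpr (Nat.cast_inv_le_one M)) L)

lemma hitProb_pos {M L : ℕ} (hM : 0 < M) (hL : 0 < L) : 0 < hitProb M L := by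
  have hM' : (0 : ℝ) < (M : ℝ)⁻¹ := by positivity
  exact sub_pos.mpr
    (pow_lt_one₀ (sub_nonneg.mpr (Nat.cast_inv_le_one M)) (by linarith) hL.ne')

lemma hitProb_le_div (M L : ℕ) : hitProb M L ≤ L / M := by
  have bernoulli := one_add_mul_le_pow (a := -(M : ℝ)⁻¹)
    (by linarith [Nat.cast_inv_le_one (α := ℝ) M]) L
  rw [← sub_eq_add_neg] at bernoulli
  rw [hitProb, div_eq_mul_inv]
  linarith

lemma div_one_add_div_le_hitProb (M L : ℕ) :
    (L / M : ℝ) / (1 + L / M) ≤ hitProb M L := by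
  have hinv_le : (M : ℝ)⁻¹ ≤ 1 := Nat.cast_inv_le_one M
  have hinv_nonneg : (0 : ℝ) ≤ (M : ℝ)⁻¹ := by positivity
  have bernoulli : 1 + (L / M : ℝ) ≤ (1 + (M : ℝ)⁻¹) ^ L :=
    (div_eq_mul_inv (L : ℝ) M) ▸ one_add_mul_le_pow (by linarith) L
  have hmiss : (1 - (M : ℝ)⁻¹) ^ L * (1 + L / M) ≤ 1 :=
    calc (1 - (M : ℝ)⁻¹) ^ L * (1 + L / M)
        ≤ (1 - (M : ℝ)⁻¹) ^ L * (1 + (M : ℝ)⁻¹) ^ L :=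
          mul_le_mul_of_nonneg_left bernoulli (pow_nonneg (sub_nonneg.mpr hinv_le) L)
      _ = (1 - (M : ℝ)⁻¹ ^ 2) ^ L := by rw [← mul_pow]; ring
      _ ≤ 1 := pow_le_one₀ (by nlinarith) (by nlinarith)
  rw [div_le_iff₀ (by positivity), hitProb]
  linarith

variable [Fintype P] [Fintype J] [DecidableEq J]

lemma expect_ne (a : P) [DecidableEq P] :
    𝔼 b : P, (if b = a then 0 else 1 : ℝ) = 1 - (Fintype.card P : ℝ)⁻¹ := by
  have : Nonempty P := ⟨a⟩
  have hsub (b : P) : (if b = a then 0 else 1 : ℝ) = 1 - if b = a then 1 else 0 := by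
    split_ifs <;> norm_num
  simp [hsub, Finset.expect_sub_distrib]

lemma expect_hit (a : P) :
    𝔼 g : J → P, hit a g = hitProb (Fintype.card P) (Fintype.card J) := by
  classical
  have : Nonempty P := ⟨a⟩
  simp only [hit_eq_one_sub_prod, Finset.expect_sub_distrib, Fintype.expect_const]
  rw [expect_prod_pi (fun _ : J ↦ fun b ↦ if b = a then 0 else 1)]
  simp only [expect_ne, Finset.prod_const, Finset.card_univ, hitProb]

lemma expect_hit_mul_hit_le {a b : P} (hab : a ≠ b) :
    𝔼 g : J → P, hit a g * hit b g ≤ hitProb (Fintype.card P) (Fintype.card J) ^ 2 := by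
  classical
  have : Nonempty P := ⟨a⟩
  set x : ℝ := (Fintype.card P : ℝ)⁻¹ with hx
  have hx_half : 2 * x ≤ 1 := by
    have : (2 : ℝ) ≤ Fintype.card P := by exact_mod_cast Fintype.one_lt_card_iff.mpr ⟨a, b, hab⟩
    rw [hx, ← div_eq_mul_inv]
    exact div_le_one_of_le₀ this (by positivity)
  have hmiss_both : 𝔼 c : P, ((if c = a then 0 else 1) * (if c = b then 0 else 1) : ℝ) =
      1 - 2 * x := by
    have hsub (c : P) : ((if c = a then 0 else 1) * (if c = b then 0 else 1) : ℝ) =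
        (if c = a then 0 else 1) + (if c = b then 0 else 1) - 1 := by
      split_ifs <;> simp_all
    simp only [hsub, Finset.expect_sub_distrib, Finset.expect_add_distrib, expect_ne,
      Fintype.expect_const]
    ring
  have hexpand (g : J → P) : hit a g * hit b g = 1 - (∏ j, if g j = a then (0 : ℝ) else 1) -
      (∏ j, if g j = b then (0 : ℝ) else 1) +
        ∏ j, ((if g j = a then 0 else 1) * (if g j = b then 0 else 1)) := by
    rw [hit_eq_one_sub_prod, hit_eq_one_sub_prod, Finset.prod_mul_distrib]
    ring
  simp only [hexpand, Finset.expect_add_distrib, Finset.expect_sub_distrib, Fintype.expect_const]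
  rw [expect_prod_pi (fun _ : J ↦ fun c ↦ if c = a then 0 else 1),
    expect_prod_pi (fun _ : J ↦ fun c ↦ if c = b then 0 else 1),
    expect_prod_pi (fun _ : J ↦ fun c ↦ (if c = a then 0 else 1) * (if c = b then 0 else 1))]
  simp only [expect_ne, hmiss_both, Finset.prod_const, Finset.card_univ, hitProb, ← hx]
  have hpow : (1 - 2 * x) ^ Fintype.card J ≤ ((1 - x) ^ Fintype.card J) ^ 2 := by
    rw [pow_right_comm]
    exact pow_le_pow_left₀ (by linarith) (by nlinarith [sq_nonneg x]) _
  linarith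

lemma expect_prod_hit_mul_prod_hit_le {R : Type*} [Fintype R] [DecidableEq R] [DecidableEq P]
    (a b : R → P) (T : Finset R) :
    𝔼 ω : R → J → P, (∏ ρ, hit (a ρ) (ω ρ)) * ∏ ρ ∈ T, hit (b ρ) (ω ρ) ≤
      hitProb (Fintype.card P) (Fintype.card J) ^
        (Fintype.card R + Finset.card {ρ ∈ T | a ρ ≠ b ρ}) := by
  set p := hitProb (Fintype.card P) (Fintype.card J)
  have hfactor (ρ : R) : 𝔼 g : J → P, hit (a ρ) g * (if ρ ∈ T then hit (b ρ) g else 1) ≤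
      p * if ρ ∈ ({ρ ∈ T | a ρ ≠ b ρ} : Finset R) then p else 1 := by
    simp only [Finset.mem_filter]
    by_cases hT : ρ ∈ T
    · by_cases hab : a ρ = b ρ
      · simp [hT, hab, hit_mul_self, expect_hit, p]
      · simpa [hT, hab, sq] using expect_hit_mul_hit_le (J := J) hab
    · simp [hT, expect_hit, p]
  calc 𝔼 ω : R → J → P, (∏ ρ, hit (a ρ) (ω ρ)) * ∏ ρ ∈ T, hit (b ρ) (ω ρ)
      = ∏ ρ, 𝔼 g : J → P, hit (a ρ) g * (if ρ ∈ T then hit (b ρ) g else 1) := by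
        rw [← expect_prod_pi fun ρ g ↦ hit (a ρ) g * (if ρ ∈ T then hit (b ρ) g else 1)]
        simp only [Finset.prod_mul_distrib, Fintype.prod_ite_mem]
    _ ≤ ∏ ρ, (p * if ρ ∈ ({ρ ∈ T | a ρ ≠ b ρ} : Finset R) then p else 1) :=
        Finset.prod_le_prod (fun ρ _ ↦ Finset.expect_nonneg fun g _ ↦ mul_nonneg (hit_nonneg _ _)
          (by split_ifs; exacts [hit_nonneg _ _, zero_le_one])) fun ρ _ ↦ hfactor ρ
    _ = p ^ (Fintype.card R + Finset.card {ρ ∈ T | a ρ ≠ b ρ}) := by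
        rw [Finset.prod_mul_distrib, Fintype.prod_ite_mem, Finset.prod_const, Finset.prod_const,
          Finset.card_univ, pow_add]

end Hit

section SecondMoment

variable {R Y P J : Type*}

/-- Two embedded copies conflict when they share the piece of a late requirement, so that a hit of
this piece does not determine which of the two it serves. Here `e ρ y` is the piece that the
copy indexed by `y` needs for the requirement `ρ`. -/
def Conflict (e : R → Y → P) (late : Finset R) (y y' : Y) : Prop :=
  y' ≠ y ∧ ∃ ρ ∈ late, e ρ y' = e ρ y

/-- The family `H` of sets of drawn pieces contains a whole copy, and no conflicting copy has all
its early pieces drawn. -/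
def HasIsolated (e : R → Y → P) (late : Finset R) (H : R → Set P) : Prop :=
  ∃ y, (∀ ρ, e ρ y ∈ H ρ) ∧ ∀ y', Conflict e late y y' → ∃ ρ ∉ late, e ρ y' ∉ H ρ

/-- The number of copies all of whose pieces are drawn in the sample `ω`. -/
noncomputable def completeCount [Fintype R] [Fintype Y] (e : R → Y → P) (ω : R → J → P) : ℝ :=
  ∑ y, ∏ ρ, hit (e ρ y) (ω ρ)

open Classical in
/-- The number of pairs of `C`-related copies in the sample `ω`, of which the first is complete
and the second has its pieces in `T`. -/
noncomputable def pairCount [Fintype R] [Fintype Y] (e : R → Y → P) (T : Finset R)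
    (C : Y → Y → Prop) (ω : R → J → P) : ℝ :=
  ∑ y, ∑ y' with C y y', (∏ ρ, hit (e ρ y) (ω ρ)) * ∏ ρ ∈ T, hit (e ρ y') (ω ρ)

section Counts

variable [Fintype R] [Fintype Y] (e : R → Y → P)

lemma completeCount_sq (ω : R → J → P) :
    completeCount e ω ^ 2 = pairCount e Finset.univ (fun _ _ ↦ True) ω := by
  simp only [completeCount, pairCount, sq, Finset.sum_mul_sum, Finset.filter_true]

lemma pairCount_nonneg (T : Finset R) (C : Y → Y → Prop) (ω : R → J → P) :
    0 ≤ pairCount e T C ω :=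
  Finset.sum_nonneg fun _ _ ↦ Finset.sum_nonneg fun _ _ ↦
    mul_nonneg (Finset.prod_nonneg fun _ _ ↦ hit_nonneg _ _)
      (Finset.prod_nonneg fun _ _ ↦ hit_nonneg _ _)

lemma completeCount_le_pairCount [DecidableEq R] (late : Finset R) {ω : R → J → P}
    (hω : ¬HasIsolated e late fun ρ ↦ Set.range (ω ρ)) :
    completeCount e ω ≤ pairCount e lateᶜ (Conflict e late) ω := by
  classical
  have hnonneg (T : Finset R) (y : Y) : 0 ≤ ∏ ρ ∈ T, hit (e ρ y) (ω ρ) :=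
    Finset.prod_nonneg fun _ _ ↦ hit_nonneg _ _
  refine Finset.sum_le_sum fun y _ ↦ ?_
  by_cases hy : ∀ ρ, e ρ y ∈ Set.range (ω ρ)
  · obtain ⟨y', hconflict, hearly⟩ : ∃ y', Conflict e late y y' ∧
        ∀ ρ ∉ late, e ρ y' ∈ Set.range (ω ρ) := by
      by_contra! h
      exact hω ⟨y, hy, h⟩
    have hone : ∏ ρ ∈ lateᶜ, hit (e ρ y') (ω ρ) = 1 :=
      Finset.prod_eq_one fun ρ hρ ↦ hit_of_mem (hearly ρ (Finset.mem_compl.mp hρ))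
    calc ∏ ρ, hit (e ρ y) (ω ρ)
        = (∏ ρ, hit (e ρ y) (ω ρ)) * ∏ ρ ∈ lateᶜ, hit (e ρ y') (ω ρ) := by rw [hone, mul_one]
      _ ≤ _ := Finset.single_le_sum
          (f := fun y' ↦ (∏ ρ, hit (e ρ y) (ω ρ)) * ∏ ρ ∈ lateᶜ, hit (e ρ y') (ω ρ))
          (fun y' _ ↦ mul_nonneg (hnonneg _ y) (hnonneg _ y')) (by simpa using hconflict)
  · push Not at hy
    obtain ⟨ρ, hρ⟩ := hy
    calc ∏ ρ, hit (e ρ y) (ω ρ)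
        = 0 := Finset.prod_eq_zero (Finset.mem_univ ρ) (hit_of_notMem hρ)
      _ ≤ _ := Finset.sum_nonneg fun y' _ ↦ mul_nonneg (hnonneg _ y) (hnonneg _ y')

lemma expect_completeCount [DecidableEq R] [Fintype P] [Fintype J] [DecidableEq J] :
    𝔼 ω : R → J → P, completeCount e ω =
      Fintype.card Y * hitProb (Fintype.card P) (Fintype.card J) ^ Fintype.card R := by
  simp only [completeCount, Finset.expect_sum_comm, expect_prod_pi fun ρ ↦ hit (e ρ _),
    expect_hit, Finset.prod_const, Finset.sum_const, Finset.card_univ, nsmul_eq_mul]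

end Counts

lemma pow_le_pow_mul_inv_pow {p : ℝ} (hp : 0 < p) (hp_one : p ≤ 1) {a m k t : ℕ}
    (h : m ≤ a + k * t) : p ^ a ≤ p ^ m * ((p ^ k)⁻¹) ^ t := by
  rw [inv_pow, ← pow_mul, ← div_eq_mul_inv, le_div_iff₀ (pow_pos hp _), ← pow_add]
  exact pow_le_pow_of_le_one hp.le hp_one h

variable {ι α : Type*} [Fintype ι] [Fintype α] [DecidableEq α]

lemma sum_sum_pow_card_agree [DecidableEq ι] (Q : ℝ) :
    ∑ y : ι → α, ∑ y' : ι → α, Q ^ Finset.card {i | y i = y' i} =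
      (Fintype.card α * (Fintype.card α + Q - 1)) ^ Fintype.card ι := by
  have hrow (a : α) : ∑ b, (if a = b then Q else 1) = Fintype.card α + Q - 1 := by
    have hsplit (b : α) : (if a = b then Q else 1) = 1 + if a = b then Q - 1 else 0 := by
      split_ifs <;> ring
    simp only [hsplit, Finset.sum_add_distrib, Finset.sum_const, Finset.card_univ, nsmul_eq_mul,
      Finset.sum_ite_eq, Finset.mem_univ, if_true]
    ring
  calc ∑ y : ι → α, ∑ y' : ι → α, Q ^ Finset.card {i | y i = y' i}
      = ∑ y : ι → α, ∑ y' : ι → α, ∏ i, if y i = y' i then Q else 1 := by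
        simp only [Finset.prod_ite, Finset.prod_const, one_pow, mul_one]
    _ = ∑ y : ι → α, ∏ i, ∑ b, if y i = b then Q else 1 := by
        simp only [Fintype.prod_sum]
    _ = (Fintype.card α * (Fintype.card α + Q - 1)) ^ Fintype.card ι := by
        simp only [hrow, Finset.prod_const, Finset.sum_const, Finset.card_univ,
          Fintype.card_fun, nsmul_eq_mul, Nat.cast_pow, mul_pow]

variable [Fintype R] [DecidableEq R] [Fintype P] [DecidableEq P] [Fintype J] [DecidableEq J]
  (e : R → (ι → α) → P)

lemma expect_pairCount_le [DecidableEq ι] {p : ℝ}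
    (hp_def : p = hitProb (Fintype.card P) (Fintype.card J)) (hp : 0 < p) (T : Finset R)
    {C : (ι → α) → (ι → α) → Prop} {k m : ℕ}
    (h : ∀ y y', C y y' → m ≤ Fintype.card R + Finset.card {ρ ∈ T | e ρ y ≠ e ρ y'} +
      k * Finset.card {i | y i = y' i}) :
    𝔼 ω : R → J → P, pairCount e T C ω ≤
      p ^ m * (Fintype.card α * (Fintype.card α + (p ^ k)⁻¹)) ^ Fintype.card ι := by
  classical
  have hp_one : p ≤ 1 := hp_def.trans_le (hitProb_le_one _ _)
  have hQ : 1 ≤ (p ^ k)⁻¹ := (one_le_inv₀ (pow_pos hp k)).mpr (pow_le_one₀ hp.le hp_one)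
  calc 𝔼 ω : R → J → P, pairCount e T C ω
      = ∑ y, ∑ y' with C y y', 𝔼 ω : R → J → P,
          (∏ ρ, hit (e ρ y) (ω ρ)) * ∏ ρ ∈ T, hit (e ρ y') (ω ρ) := by
        simp only [pairCount, Finset.expect_sum_comm]
    _ ≤ ∑ y : ι → α, ∑ y' with C y y', p ^ m * ((p ^ k)⁻¹) ^ Finset.card {i | y i = y' i} := by
        refine Finset.sum_le_sum fun y _ ↦ Finset.sum_le_sum fun y' hy' ↦ ?_
        have hC : C y y' := (Finset.mem_filter.mp hy').2
        calc _ ≤ _ := expect_prod_hit_mul_prod_hit_le (e · y) (e · y') T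
          _ ≤ _ := hp_def ▸ pow_le_pow_mul_inv_pow hp hp_one (h y y' hC)
    _ ≤ ∑ y : ι → α, ∑ y' : ι → α, p ^ m * ((p ^ k)⁻¹) ^ Finset.card {i | y i = y' i} :=
        Finset.sum_le_sum fun y _ ↦
          Finset.sum_le_sum_of_subset_of_nonneg (Finset.filter_subset _ _)
            fun _ _ _ ↦ mul_nonneg (pow_nonneg hp.le m) (pow_nonneg (zero_le_one.trans hQ) _)
    _ = p ^ m * (Fintype.card α * (Fintype.card α + (p ^ k)⁻¹ - 1)) ^ Fintype.card ι := by
        simp only [← Finset.mul_sum, sum_sum_pow_card_agree]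
    _ ≤ p ^ m * (Fintype.card α * (Fintype.card α + (p ^ k)⁻¹)) ^ Fintype.card ι := by
        have hN : (0 : ℝ) ≤ Fintype.card α := Nat.cast_nonneg _
        gcongr
        · exact mul_nonneg hN (by linarith)
        · linarith

open Classical in
lemma dens_not_hasIsolated_le [Nonempty α] {p : ℝ}
    (hp_def : p = hitProb (Fintype.card P) (Fintype.card J)) (hp : 0 < p) (late : Finset R)
    {k d : ℕ}
    (hpair : ∀ y y', Fintype.card R ≤ Finset.card {ρ | e ρ y ≠ e ρ y'} +
      k * Finset.card {i | y i = y' i})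
    (hconflict : ∀ y y', Conflict e late y y' →
      Fintype.card R + d ≤ Finset.card {ρ ∈ lateᶜ | e ρ y ≠ e ρ y'} +
        k * Finset.card {i | y i = y' i}) :
    (({ω : R → J → P | ¬HasIsolated e late fun ρ ↦ Set.range (ω ρ)} : Finset _).dens : ℝ) ≤
      4 * ((1 + 1 / (Fintype.card α * p ^ k)) ^ Fintype.card ι - 1) +
        2 * (p ^ (Fintype.card R + d) * (Fintype.card α + (p ^ k)⁻¹) ^ Fintype.card ι) := by
  set N : ℝ := (Fintype.card α : ℝ)
  set r := Fintype.card R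
  have hfirst : 𝔼 ω : R → J → P, completeCount e ω = N ^ Fintype.card ι * p ^ r := by
    rw [expect_completeCount, ← hp_def, Fintype.card_fun, Nat.cast_pow]
  have hsecond : 𝔼 ω : R → J → P, completeCount e ω ^ 2 ≤
      p ^ (r + r) * (N * (N + (p ^ k)⁻¹)) ^ Fintype.card ι := by
    simp only [completeCount_sq]
    exact expect_pairCount_le e hp_def hp _ fun y y' _ ↦ by linarith [hpair y y']
  have hbad : 𝔼 ω : R → J → P, pairCount e lateᶜ (Conflict e late) ω ≤
      p ^ (r + (r + d)) * (N * (N + (p ^ k)⁻¹)) ^ Fintype.card ι :=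
    expect_pairCount_le e hp_def hp _ fun y y' hyy' ↦ by linarith [hconflict y y' hyy']
  have : Nonempty (R → J → P) := ⟨fun ρ _ ↦ e ρ (Classical.arbitrary _)⟩
  have hN : 0 < N := Nat.cast_pos.mpr Fintype.card_pos
  have hspread : N + (p ^ k)⁻¹ = N * (1 + 1 / (N * p ^ k)) := by field_simp
  refine (dens_filter_le_of_imp_le (by positivity) hfirst
    (fun ω ↦ pairCount_nonneg e lateᶜ (Conflict e late) ω) _
    fun ω ↦ completeCount_le_pairCount e late).trans ?_
  gcongr
  · calc _ ≤ p ^ (r + r) * (N * (N + (p ^ k)⁻¹)) ^ Fintype.card ι /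
          (N ^ Fintype.card ι * p ^ r) ^ 2 := by gcongr
      _ = (1 + 1 / (N * p ^ k)) ^ Fintype.card ι := by
        rw [hspread, pow_add, ← mul_assoc, mul_pow, mul_pow]
        field_simp
  · calc _ ≤ p ^ (r + (r + d)) * (N * (N + (p ^ k)⁻¹)) ^ Fintype.card ι /
          (N ^ Fintype.card ι * p ^ r) := by gcongr
      _ = p ^ (r + d) * (N + (p ^ k)⁻¹) ^ Fintype.card ι := by
        rw [pow_add p r (r + d), mul_pow]
        field_simp

end SecondMoment

section Histories

lemma uniformOfFintype_fin_succ_arrow {P : Type*} [Fintype P] [Nonempty P] (t : ℕ) :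
    PMF.uniformOfFintype (Fin (t + 1) → P) =
      (PMF.uniformOfFintype (Fin t → P)).bind fun f ↦
        (PMF.uniformOfFintype P).map fun a ↦ (Fin.cons a f : Fin (t + 1) → P) := by
  classical
  ext g
  have hcons (f : Fin t → P) (a : P) :
      g = (Fin.cons a f : Fin (t + 1) → P) ↔ f = Fin.tail g ∧ a = g 0 := by
    rw [← Fin.cons_self_tail g, Fin.cons_inj, Fin.cons_zero, Fin.tail_cons]
    exact ⟨fun h ↦ ⟨h.2.symm, h.1.symm⟩, fun h ↦ ⟨h.2.symm, h.1.symm⟩⟩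
  simp only [PMF.bind_apply, PMF.map_apply, PMF.uniformOfFintype_apply, tsum_fintype, hcons,
    ite_and, Finset.sum_ite_irrel, Finset.sum_const_zero, Finset.sum_ite_eq', Finset.mem_univ,
    if_true, mul_ite, mul_zero, Fintype.card_fun, Fintype.card_fin, pow_succ, Nat.cast_mul]
  exact ENNReal.mul_inv (.inr (ENNReal.natCast_ne_top _)) (.inl (ENNReal.natCast_ne_top _))

variable {n r s : ℕ}

/-- The history, most recent round first, that arises when the draws are `us`, most recent first,
and the draw `U` following the draws `past` is answered by `G past U`. -/
def play (G : List (Col n r) → Col n r → Col n (s - r)) : List (Col n r) → List (Step n r s)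
  | [] => []
  | U :: past => (U, G past U) :: play G past

/-- The strategy that deterministically answers the draw `U` following the draws `past` by
`G past U`. -/
noncomputable def deterministicStrategy (G : List (Col n r) → Col n r → Col n (s - r)) :
    Strategy n r s :=
  fun hist U ↦ PMF.pure (G (hist.map Prod.fst) U)

variable (G : List (Col n r) → Col n r → Col n (s - r))

lemma map_fst_play (us : List (Col n r)) : (play G us).map Prod.fst = us := by
  induction us with
  | nil => rfl
  | cons U past ih => rw [play, List.map_cons, ih]

lemma mem_play_of_suffix {U : Col n r} {past us : List (Col n r)} (h : (U :: past) <:+ us) :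
    (U, G past U) ∈ play G us := by
  induction us with
  | nil => exact absurd (List.suffix_nil.mp h) (List.cons_ne_nil _ _)
  | cons U' past' ih =>
    rcases List.suffix_cons_iff.mp h with heq | hsuffix
    · obtain ⟨rfl, rfl⟩ := List.cons_eq_cons.mp heq
      exact List.mem_cons_self
    · exact List.mem_cons_of_mem _ (ih hsuffix)

lemma historyPMF_deterministicStrategy (h : Nonempty (Col n r)) (t : ℕ) :
    historyPMF h (deterministicStrategy G) t =
      (PMF.uniformOfFintype (Fin t → Col n r)).map fun f ↦ play G (List.ofFn f) := by
  induction t with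
  | zero =>
    simp only [historyPMF, List.ofFn_zero, play]
    exact (PMF.map_const _ _).symm
  | succ t ih =>
    rw [historyPMF, ih, uniformOfFintype_fin_succ_arrow]
    simp only [PMF.map_bind, PMF.bind_map, PMF.pure_map, PMF.map_comp, deterministicStrategy,
      Function.comp_def, map_fst_play, List.ofFn_succ, Fin.cons_zero, Fin.cons_succ, play]
    rfl

lemma ofReal_one_sub_dens_le_probContains {V Ω : Type*} [Fintype Ω] {E : Finset (Finset V)}
    (hr : r ≤ n) {t : ℕ} (w : (Fin t → Col n r) ≃ Ω) {B : Ω → Prop} [DecidablePred B]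
    (hB : ∀ f, ¬B (w f) → ContainsCopy E (play G (List.ofFn f))) :
    ENNReal.ofReal (1 - (({ω | B ω} : Finset Ω).dens : ℝ)) ≤
      probContains n r s E (deterministicStrategy G) t := by
  classical
  have : Nonempty (Col n r) := col_nonempty hr
  have : Nonempty Ω := w.nonempty_congr.mp inferInstance
  set A : Set (Fin t → Col n r) := {f | ContainsCopy E (play G (List.ofFn f))}
  have hcompl : 1 - (({ω | B ω} : Finset Ω).dens : ℝ) = ({ω | ¬B ω} : Finset Ω).dens := by
    rw [sub_eq_iff_eq_add', ← NNRat.cast_add, Finset.dens_filter_add_dens_filter_not_eq_dens,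
      Finset.dens_univ, NNRat.cast_one]
  have hsub : ({ω | ¬B ω} : Finset Ω) ⊆ A.toFinset.map w.toEmbedding := fun ω hω ↦ by
    rw [Finset.mem_map_equiv, Set.mem_toFinset]
    exact hB _ (by simpa using hω)
  calc ENNReal.ofReal (1 - (({ω | B ω} : Finset Ω).dens : ℝ))
      ≤ ENNReal.ofReal (A.toFinset.dens : ℝ) := by
        rw [hcompl, ← Finset.dens_map_equiv w]
        exact ENNReal.ofReal_le_ofReal (NNRat.cast_le.mpr (Finset.dens_le_dens hsub))
    _ = Fintype.card A / Fintype.card (Fin t → Col n r) := by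
        rw [Finset.nnratCast_dens, Set.toFinset_card,
          ENNReal.ofReal_div_of_pos (Nat.cast_pos.mpr Fintype.card_pos), ENNReal.ofReal_natCast,
          ENNReal.ofReal_natCast]
    _ = probContains n r s E (deterministicStrategy G) t := by
        rw [probContains, dif_pos hr, historyPMF_deterministicStrategy,
          PMF.toOuterMeasure_map_apply, PMF.toOuterMeasure_uniformOfFintype_apply]
        rfl

lemma tauQ_le {V : Type*} {E : Finset (Finset V)} {q : ℝ≥0∞} {S : Strategy n r s} {t : ℕ}
    (h : q ≤ probContains n r s E S t) : tauQ r s E q n ≤ t :=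
  (iInf_le _ S).trans (sInf_le ⟨t, rfl, h⟩)

end Histories

section Windows

variable {P : Type*}

/-- Splits the draws of `m * L` rounds, most recent first, into `m` consecutive windows of `L`
rounds, oldest window first. -/
def windows (m L : ℕ) (P : Type*) : (Fin (m * L) → P) ≃ (Fin m → Fin L → P) :=
  ((finProdFinEquiv.trans Fin.revPerm).symm.arrowCongr (Equiv.refl P)).trans (Equiv.curry _ _ _)

/-- The values drawn during the `k`-th window of `L` rounds, where `us` lists the draws, most
recent first. -/
def seen (L : ℕ) (us : List P) (k : ℕ) : Set P :=
  {a | ∃ past, (a :: past) <:+ us ∧ past.length / L = k}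

lemma exists_cons_suffix_ofFn_iff {T : ℕ} (f : Fin T → P) (a : P) (p : ℕ → Prop) :
    (∃ past, (a :: past) <:+ List.ofFn f ∧ p past.length) ↔ ∃ i : Fin T, f i.rev = a ∧ p i := by
  constructor
  · rintro ⟨past, ⟨recent, hsplit⟩, hp⟩
    have hlen : recent.length + (past.length + 1) = T := by
      simpa using congrArg List.length hsplit
    refine ⟨⟨past.length, by omega⟩, ?_, hp⟩
    have hget : (List.ofFn f)[recent.length]? = some a := by simp [← hsplit]
    rw [List.getElem?_ofFn, dif_pos (by omega), Option.some_inj] at hget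
    rw [← hget]
    congr 1
    ext
    simp only [Fin.val_rev]
    omega
  · rintro ⟨i, rfl, hp⟩
    refine ⟨(List.ofFn f).drop (i.rev + 1), ?_, ?_⟩
    · have hdrop := List.drop_eq_getElem_cons (l := List.ofFn f) (i := i.rev) (by simpa using i.pos)
      rw [List.getElem_ofFn] at hdrop
      exact hdrop ▸ List.drop_suffix _ _
    · convert hp
      simp only [List.length_drop, List.length_ofFn, Fin.val_rev]
      omega

lemma seen_ofFn {m L : ℕ} (f : Fin (m * L) → P) (k : Fin m) :
    seen L (List.ofFn f) k = Set.range (windows m L P f k) := by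
  ext a
  rw [seen, Set.mem_ofPred_eq, exists_cons_suffix_ofFn_iff f a (· / L = k)]
  have hdiv (k' : Fin m) (j : Fin L) : (finProdFinEquiv (k', j) : ℕ) / L = k' := by
    rw [finProdFinEquiv_apply_val, Nat.add_mul_div_left _ _ j.pos, Nat.div_eq_of_lt j.isLt,
      zero_add]
  constructor
  · rintro ⟨i, rfl, hi⟩
    obtain ⟨⟨k', j⟩, rfl⟩ := finProdFinEquiv.surjective i
    obtain rfl : k' = k := Fin.ext ((hdiv k' j).symm.trans hi)
    exact ⟨j, rfl⟩
  · rintro ⟨j, rfl⟩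
    exact ⟨finProdFinEquiv (k, j), rfl, hdiv k j⟩

lemma seen_eq_of_suffix {L k : ℕ} {past us : List P} (h : past <:+ us)
    (hk : k < past.length / L) : seen L past k = seen L us k := by
  refine Set.Subset.antisymm (fun a ⟨before, hbefore, hlen⟩ ↦ ⟨before, hbefore.trans h, hlen⟩) ?_
  rintro a ⟨before, hbefore, rfl⟩
  have hlt : before.length < past.length := by
    by_contra! hle
    exact hk.not_ge (Nat.div_le_div_right hle)
  exact ⟨before, List.suffix_of_suffix_length_le hbefore h hlt, rfl⟩

end Windows

section Schedule

/-- The pair of vertices of `K_6` awaited in each of the twenty windows. -/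
def targetPair : Fin 20 → Finset (Fin 6) :=
  ![{0, 4}, {1, 4}, {2, 4}, {3, 4}, {0, 1}, {0, 2}, {0, 3}, {1, 2}, {1, 3}, {2, 3},
    {0, 1}, {0, 2}, {0, 3}, {1, 2}, {1, 3}, {2, 3}, {0, 1}, {0, 1}, {0, 2}, {1, 2}]

/-- The vertex of `K_6` with which the player completes the awaited pair to an edge. -/
def thirdVertex : Fin 20 → Fin 6 := ![5, 5, 5, 5, 4, 4, 4, 4, 4, 4, 5, 5, 5, 5, 5, 5, 2, 3, 3, 3]

/-- The windows whose edges avoid the anchors `4` and `5`. -/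
def lateWindows : Finset (Fin 20) := Finset.Ici 16

/-- The non-anchor vertices in the pair awaited in a window. -/
def movable (ρ : Fin 20) : Finset (Fin 4) := {i | Fin.castAdd 2 i ∈ targetPair ρ}

lemma card_targetPair (ρ : Fin 20) : (targetPair ρ).card = 2 := by decide +revert

lemma thirdVertex_notMem_targetPair (ρ : Fin 20) : thirdVertex ρ ∉ targetPair ρ := by
  decide +revert

lemma four_le_thirdVertex {ρ : Fin 20} (hρ : ρ ∉ lateWindows) : 4 ≤ thirdVertex ρ := by
  decide +revert

lemma lt_of_notMem_lateWindows {ρ σ : Fin 20} (hσ : σ ∉ lateWindows) (hρ : ρ ∈ lateWindows) :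
    σ < ρ :=
  (not_le.mp fun h ↦ hσ (Finset.mem_Ici.mpr h)).trans_le (Finset.mem_Ici.mp hρ)

set_option maxRecDepth 10000 in
lemma exists_eq_insert_thirdVertex {T : Finset (Fin 6)}
    (hT : T ∈ Finset.powersetCard 3 (Finset.univ : Finset (Fin 6))) :
    ∃ ρ, T = insert (thirdVertex ρ) (targetPair ρ) := by
  decide +revert

set_option maxRecDepth 10000 in
lemma twenty_le_card_not_movable_subset (S : Finset (Fin 4)) :
    20 ≤ Finset.card {ρ | ¬movable ρ ⊆ S} + 5 * S.card := by
  decide +revert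

set_option maxRecDepth 10000 in
lemma twentyTwo_le_card_not_movable_subset {S : Finset (Fin 4)} (hS : S ≠ Finset.univ)
    {ρ : Fin 20} (hρ : ρ ∈ lateWindows) (hρS : movable ρ ⊆ S) :
    22 ≤ Finset.card {σ ∈ lateWindowsᶜ | ¬movable σ ⊆ S} + 5 * S.card := by
  decide +revert

end Schedule

section Placement

variable {n N : ℕ} [NeZero N] (ψ : Fin 6 × Fin N ↪ Fin n)

/-- The copy of `K_6` indexed by `y`: the `i`-th vertex lies in the `i`-th of six disjoint blocks of
size `N`, at position `y i` if `i < 4`, and at position `0` if `i` is an anchor. -/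
def placement (y : Fin 4 → Fin N) : Fin 6 ↪ Fin n :=
  ⟨fun v ↦ ψ (v, (Fin.append y fun _ : Fin 2 ↦ 0 : Fin 6 → Fin N) v),
    fun _ _ h ↦ congrArg Prod.fst (ψ.injective h)⟩

lemma placement_apply (y : Fin 4 → Fin N) (v : Fin 6) :
    placement ψ y v = ψ (v, (Fin.append y fun _ : Fin 2 ↦ 0 : Fin 6 → Fin N) v) := rfl

lemma placement_eq_iff {y y' : Fin 4 → Fin N} {v : Fin 6} {i : Fin 4} :
    placement ψ y' v = placement ψ y (Fin.castAdd 2 i) ↔ v = Fin.castAdd 2 i ∧ y' i = y i := by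
  rw [placement_apply, placement_apply, ψ.injective.eq_iff, Prod.mk.injEq]
  refine and_congr_right ?_
  rintro rfl
  exact (congrArg₂ (· = ·) (Fin.append_left _ _ i) (Fin.append_left _ _ i)).to_iff

lemma placement_of_four_le (y y' : Fin 4 → Fin N) {v : Fin 6} (hv : 4 ≤ v) :
    placement ψ y v = placement ψ y' v := by
  obtain ⟨j, rfl⟩ : ∃ j : Fin 2, v = Fin.natAdd 4 j := by decide +revert
  exact congrArg (fun a ↦ ψ (Fin.natAdd 4 j, a))
    ((Fin.append_right y _ j).trans (Fin.append_right y' (fun _ ↦ 0) j).symm)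

/-- The pair that the copy indexed by `y` needs to be drawn in the window `ρ`. -/
def piece (ρ : Fin 20) (y : Fin 4 → Fin N) : Col n 2 :=
  ⟨(targetPair ρ).map (placement ψ y), by rw [Finset.card_map, card_targetPair]⟩

lemma movable_subset_of_piece_eq {ρ : Fin 20} {y y' : Fin 4 → Fin N}
    (h : piece ψ ρ y = piece ψ ρ y') : movable ρ ⊆ ({i | y i = y' i} : Finset (Fin 4)) := by
  intro i hi
  have hmem : placement ψ y (Fin.castAdd 2 i) ∈ (targetPair ρ).map (placement ψ y') :=
    (congrArg Subtype.val h).subset (Finset.mem_map_of_mem _ (Finset.mem_filter.mp hi).2)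
  obtain ⟨v, -, hv⟩ := Finset.mem_map.mp hmem
  exact Finset.mem_filter.mpr ⟨Finset.mem_univ i, ((placement_eq_iff ψ).mp hv).2.symm⟩

lemma card_not_movable_subset_le (T : Finset (Fin 20)) (y y' : Fin 4 → Fin N) :
    Finset.card {ρ ∈ T | ¬movable ρ ⊆ ({i | y i = y' i} : Finset (Fin 4))} ≤
      Finset.card {ρ ∈ T | piece ψ ρ y ≠ piece ψ ρ y'} :=
  Finset.card_le_card <| Finset.monotone_filter_right _ fun _ _ h heq ↦
    h (movable_subset_of_piece_eq ψ heq)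

lemma twenty_le_card_piece_ne (y y' : Fin 4 → Fin N) :
    20 ≤ Finset.card {ρ | piece ψ ρ y ≠ piece ψ ρ y'} + 5 * Finset.card {i | y i = y' i} :=
  (twenty_le_card_not_movable_subset _).trans
    (Nat.add_le_add_right (card_not_movable_subset_le ψ _ y y') _)

lemma twentyTwo_le_card_piece_ne_of_conflict {y y' : Fin 4 → Fin N}
    (h : Conflict (piece ψ) lateWindows y y') :
    22 ≤ Finset.card {ρ ∈ lateWindowsᶜ | piece ψ ρ y ≠ piece ψ ρ y'} +
      5 * Finset.card {i | y i = y' i} := by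
  obtain ⟨hne, ρ, hρ, heq⟩ := h
  have hagree : ({i | y i = y' i} : Finset (Fin 4)) ≠ Finset.univ := fun huniv ↦
    hne (funext fun i ↦ (Finset.filter_eq_self.mp huniv i (Finset.mem_univ i)).symm)
  exact (twentyTwo_le_card_not_movable_subset hagree hρ
    (movable_subset_of_piece_eq ψ heq.symm)).trans
      (Nat.add_le_add_right (card_not_movable_subset_le ψ _ y y') _)

/-- The player's reply to the draw `U` in windows of length `L`: guess a copy whose early pairs have
been drawn and whose current pair is `U`, and reply with its third vertex. As the third vertices of
early windows are anchors, the guess matters in late windows only. -/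
noncomputable def reply (L : ℕ) (past : List (Col n 2)) (U : Col n 2) : Col n (3 - 2) :=
  let ρ := Fin.ofNat 20 (past.length / L)
  let y := Classical.epsilon fun y : Fin 4 → Fin N ↦
    (∀ σ ∉ lateWindows, piece ψ σ y ∈ seen L past σ) ∧ piece ψ ρ y = U
  ⟨{placement ψ y (thirdVertex ρ)}, Finset.card_singleton _⟩

variable {L : ℕ} {us : List (Col n 2)} {y : Fin 4 → Fin N}

lemma reply_piece (hearly : ∀ σ ∉ lateWindows, piece ψ σ y ∈ seen L us σ)
    (hisolated : ∀ y', Conflict (piece ψ) lateWindows y y' →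
      ∃ σ ∉ lateWindows, piece ψ σ y' ∉ seen L us σ)
    {ρ : Fin 20} {past : List (Col n 2)} (hpast : past <:+ us) (hlen : past.length / L = ρ) :
    (reply ψ L past (piece ψ ρ y)).1 = {placement ψ y (thirdVertex ρ)} := by
  have hρ : Fin.ofNat 20 (past.length / L) = ρ := by
    rw [hlen]
    exact Fin.ofNat_val_eq_self ρ
  simp only [reply, hρ, Finset.singleton_inj]
  by_cases hlate : ρ ∈ lateWindows
  · have hseen (σ : Fin 20) (hσ : σ ∉ lateWindows) : seen L past σ = seen L us σ :=
      seen_eq_of_suffix hpast (hlen ▸ lt_of_notMem_lateWindows hσ hlate)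
    have hspec := Classical.epsilon_spec (p := fun y' : Fin 4 → Fin N ↦
      (∀ σ ∉ lateWindows, piece ψ σ y' ∈ seen L past σ) ∧ piece ψ ρ y' = piece ψ ρ y)
      ⟨y, fun σ hσ ↦ hseen σ hσ ▸ hearly σ hσ, rfl⟩
    set y' := Classical.epsilon fun y' : Fin 4 → Fin N ↦
      (∀ σ ∉ lateWindows, piece ψ σ y' ∈ seen L past σ) ∧ piece ψ ρ y' = piece ψ ρ y
    by_cases heq : y' = y
    · rw [heq]
    · obtain ⟨σ, hσ, hmissing⟩ := hisolated y' ⟨heq, ρ, hlate, hspec.2⟩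
      exact absurd (hseen σ hσ ▸ hspec.1 σ hσ) hmissing
  · exact placement_of_four_le ψ _ _ (four_le_thirdVertex hlate)

lemma containsCopy_of_hasIsolated
    (h : HasIsolated (piece ψ) lateWindows fun ρ ↦ seen L us ρ) :
    ContainsCopy (Finset.powersetCard 3 (Finset.univ : Finset (Fin 6))) (play (reply ψ L) us) := by
  obtain ⟨y, hy, hisolated⟩ := h
  refine ⟨placement ψ y, fun T hT ↦ ?_⟩
  obtain ⟨ρ, rfl⟩ := exists_eq_insert_thirdVertex hT
  obtain ⟨past, hpast, hlen⟩ := hy ρ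
  refine ⟨_, mem_play_of_suffix _ hpast, ?_⟩
  rw [reply_piece ψ (fun σ _ ↦ hy σ) hisolated ((List.suffix_cons _ _).trans hpast) hlen,
    Finset.insert_val_of_notMem (thirdVertex_notMem_targetPair ρ), Multiset.map_cons,
    Finset.singleton_val, add_comm, Multiset.singleton_add]
  rfl

end Placement

section FailureBound

/-- The bound that the second moment argument gives for the probability that no copy of `K_6` is
isolated, when the non-anchor vertices vary in blocks of size `N` and `p` is the probability that a
given pair is drawn in a given window. -/
noncomputable def failureBound (N p : ℝ) : ℝ :=
  4 * ((1 + 1 / (N * p ^ 5)) ^ 4 - 1) + 2 * (p ^ 2 * (N * p ^ 5 + 1) ^ 4)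

variable {n N L : ℕ}

open Classical in
lemma dens_not_hasIsolated_piece_le [NeZero N] (ψ : Fin 6 × Fin N ↪ Fin n) (hn : 2 ≤ n)
    (hL : 0 < L) :
    ((({ω : Fin 20 → Fin L → Col n 2 |
        ¬HasIsolated (piece ψ) lateWindows fun ρ ↦ Set.range (ω ρ)} : Finset _).dens) : ℝ) ≤
      failureBound N (hitProb (n.choose 2) L) := by
  have hpos : 0 < hitProb (n.choose 2) L := hitProb_pos (Nat.choose_pos hn) hL
  have hp_def : hitProb (n.choose 2) L =
      hitProb (Fintype.card (Col n 2)) (Fintype.card (Fin L)) := by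
    rw [Fintype.card_finset_len, Fintype.card_fin, Fintype.card_fin]
  have hbound := dens_not_hasIsolated_le (piece ψ) hp_def hpos lateWindows (k := 5) (d := 2)
    (by simpa only [Fintype.card_fin] using twenty_le_card_piece_ne ψ)
    (by simpa only [Fintype.card_fin] using fun y y' ↦
      twentyTwo_le_card_piece_ne_of_conflict ψ (y := y) (y' := y'))
  simp only [Fintype.card_fin] at hbound
  refine hbound.trans_eq ?_
  rw [failureBound]
  field_simp
  ring

lemma exists_strategy_probContains_ge (hN : 0 < N) (hNn : 6 * N ≤ n) (hL : 0 < L) :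
    ∃ S : Strategy n 2 3, ENNReal.ofReal (1 - failureBound N (hitProb (n.choose 2) L)) ≤
      probContains n 2 3 (Finset.powersetCard 3 (Finset.univ : Finset (Fin 6))) S (20 * L) := by
  classical
  have : NeZero N := ⟨hN.ne'⟩
  have hn : 2 ≤ n := by omega
  obtain ⟨ψ⟩ : Nonempty (Fin 6 × Fin N ↪ Fin n) :=
    Function.Embedding.nonempty_of_card_le (by simpa using hNn)
  refine ⟨deterministicStrategy (reply ψ L), le_trans ?_
    (ofReal_one_sub_dens_le_probContains (reply ψ L) hn (windows 20 L (Col n 2))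
      (B := fun ω ↦ ¬HasIsolated (piece ψ) lateWindows fun ρ ↦ Set.range (ω ρ))
      fun f hf ↦ containsCopy_of_hasIsolated ψ ?_)⟩
  · gcongr
    exact dens_not_hasIsolated_piece_le ψ hn hL
  · simpa only [seen_ofFn] using not_not.mp hf

lemma tendsto_failureBound {ι : Type*} {l : Filter ι} {N p : ι → ℝ} {b : ℝ} (hb : b ≠ 0)
    (hp : Tendsto p l (𝓝 0)) (hNp : Tendsto (fun i ↦ N i * p i ^ 5) l (𝓝 b)) :
    Tendsto (fun i ↦ failureBound (N i) (p i)) l (𝓝 (4 * ((1 + 1 / b) ^ 4 - 1))) := by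
  have hinv : Tendsto (fun i ↦ 1 / (N i * p i ^ 5)) l (𝓝 (1 / b)) :=
    tendsto_const_nhds.div hNp hb
  have hvar := (((hinv.const_add 1).pow 4).sub_const 1).const_mul 4
  have hconflict := ((hp.pow 2).mul ((hNp.add_const 1).pow 4)).const_mul 2
  simpa [failureBound] using hvar.add hconflict

end FailureBound

section Asymptotics

lemma tendsto_hitProb_mul {ι : Type*} {l : Filter ι} {M L : ι → ℕ} {c : ι → ℝ} {a : ℝ}
    (hc : Tendsto c l atTop) (hLM : Tendsto (fun i ↦ (L i / M i : ℝ) * c i) l (𝓝 a)) :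
    Tendsto (fun i ↦ hitProb (M i) (L i) * c i) l (𝓝 a) := by
  have hzero : Tendsto (fun i ↦ (L i / M i : ℝ)) l (𝓝 0) :=
    (hLM.div_atTop hc).congr' <| (hc.eventually_ne_atTop 0).mono fun i hi ↦
      mul_div_cancel_right₀ _ hi
  have hlower : Tendsto (fun i ↦ (L i / M i : ℝ) / (1 + L i / M i) * c i) l (𝓝 a) := by
    have hdiv := hLM.div (hzero.const_add 1) (by norm_num)
    rw [add_zero, div_one] at hdiv
    exact hdiv.congr fun i ↦ mul_div_right_comm _ _ _
  refine tendsto_of_tendsto_of_tendsto_of_le_of_le' hlower hLM ?_ ?_ <;>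
    filter_upwards [hc.eventually_ge_atTop 0] with i hi
  · exact mul_le_mul_of_nonneg_right (div_one_add_div_le_hitProb _ _) hi
  · exact mul_le_mul_of_nonneg_right (hitProb_le_div _ _) hi

lemma tendsto_natCast_rpow_atTop {a : ℝ} (ha : 0 < a) :
    Tendsto (fun n : ℕ ↦ (n : ℝ) ^ a) atTop atTop :=
  (tendsto_rpow_atTop ha).comp tendsto_natCast_atTop_atTop

lemma tendsto_sq_div_choose_two :
    Tendsto (fun n : ℕ ↦ (n : ℝ) ^ 2 / n.choose 2) atTop (𝓝 2) := by
  have h := (isEquivalent_choose 2).symm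
  have hne : ∀ᶠ n : ℕ in atTop, (n.choose 2 : ℝ) ≠ 0 :=
    (eventually_ge_atTop 2).mono fun n hn ↦ Nat.cast_ne_zero.mpr (Nat.choose_pos hn).ne'
  have h1 := ((Asymptotics.isEquivalent_iff_tendsto_one hne).mp h).const_mul 2
  rw [mul_one] at h1
  refine h1.congr fun n ↦ ?_
  simp only [Pi.div_apply, Nat.factorial_two, Nat.cast_ofNat]
  ring

lemma tendsto_natDiv_div_self (k : ℕ) :
    Tendsto (fun n : ℕ ↦ ((n / k : ℕ) : ℝ) / n) atTop (𝓝 (k : ℝ)⁻¹) := by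
  refine ((tendsto_nat_floor_mul_div_atTop (R := ℝ) (a := (k : ℝ)⁻¹) (by positivity)).comp
    tendsto_natCast_atTop_atTop).congr fun n ↦ ?_
  simp only [Function.comp_apply]
  rw [← Nat.floor_div_eq_div (K := ℝ), inv_mul_eq_div]

lemma tendsto_hitProb_mul_rpow {K : ℝ} (hK : 0 ≤ K) :
    Tendsto (fun n : ℕ ↦ hitProb (n.choose 2) ⌈K * (n : ℝ) ^ (9 / 5 : ℝ)⌉₊ * (n : ℝ) ^ (1 / 5 : ℝ))
      atTop (𝓝 (2 * K)) := by
  refine tendsto_hitProb_mul (tendsto_natCast_rpow_atTop (by norm_num)) ?_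
  have hL := (tendsto_nat_ceil_mul_div_atTop hK).comp
    (tendsto_natCast_rpow_atTop (a := 9 / 5) (by norm_num))
  rw [mul_comm 2 K]
  refine (hL.mul tendsto_sq_div_choose_two).congr' ?_
  filter_upwards [eventually_gt_atTop 0] with n hn
  have hn' : (0 : ℝ) < n := Nat.cast_pos.mpr hn
  have hpow : (n : ℝ) ^ 2 = (n : ℝ) ^ (9 / 5 : ℝ) * (n : ℝ) ^ (1 / 5 : ℝ) := by
    rw [← Real.rpow_add hn', ← Real.rpow_natCast]
    norm_num
  simp only [Function.comp_apply, hpow]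
  field_simp

lemma tendsto_failureBound_hitProb {K : ℝ} (hK : 0 < K) :
    Tendsto (fun n : ℕ ↦
        failureBound (n / 6 : ℕ) (hitProb (n.choose 2) ⌈K * (n : ℝ) ^ (9 / 5 : ℝ)⌉₊))
      atTop (𝓝 (4 * ((1 + 1 / (16 / 3 * K ^ 5)) ^ 4 - 1))) := by
  have hroot := tendsto_natCast_rpow_atTop (a := 1 / 5) (by norm_num)
  have hscaled := tendsto_hitProb_mul_rpow hK.le
  refine tendsto_failureBound (by positivity) ?_ ?_
  · exact (hscaled.div_atTop hroot).congr' <| (hroot.eventually_ne_atTop 0).mono fun n hn ↦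
      mul_div_cancel_right₀ _ hn
  · have hprod := (tendsto_natDiv_div_self 6).mul (hscaled.pow 5)
    have hlim : ((6 : ℕ) : ℝ)⁻¹ * (2 * K) ^ 5 = 16 / 3 * K ^ 5 := by
      push_cast
      ring
    rw [hlim] at hprod
    refine hprod.congr' ?_
    filter_upwards [eventually_gt_atTop 0] with n hn
    have hpow : ((n : ℝ) ^ (1 / 5 : ℝ)) ^ 5 = n := by
      rw [← Real.rpow_mul_natCast n.cast_nonneg]
      norm_num
    rw [mul_pow, hpow]
    field_simp

lemma exists_limit_failureBound_lt {ε : ℝ} (hε : 0 < ε) :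
    ∃ K : ℝ, 0 < K ∧ 4 * ((1 + 1 / (16 / 3 * K ^ 5)) ^ 4 - 1) < ε := by
  have hb : Tendsto (fun K : ℝ ↦ 16 / 3 * K ^ 5) atTop atTop :=
    (tendsto_pow_atTop (by norm_num)).const_mul_atTop (by norm_num)
  have hlim := ((((hb.const_div_atTop 1).const_add 1).pow 4).sub_const 1).const_mul 4
  rw [add_zero, one_pow, sub_self, mul_zero] at hlim
  obtain ⟨K, hlt, hpos⟩ := ((hlim.eventually_lt_const hε).and (eventually_gt_atTop 0)).exists
  exact ⟨K, hpos, hlt⟩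

lemma exists_eventually_tauQ_K6_le {q : ℝ≥0∞} (hq : q < 1) :
    ∃ C : ℝ, ∀ᶠ n : ℕ in atTop, ∃ m : ℕ, (m : ℝ) ≤ C * (n : ℝ) ^ (9 / 5 : ℝ) ∧
      tauQ 2 3 (Finset.powersetCard 3 (Finset.univ : Finset (Fin 6))) q n ≤ m := by
  have hq' : q.toReal < 1 := by
    simpa using (ENNReal.toReal_lt_toReal hq.ne_top ENNReal.one_ne_top).mpr hq
  obtain ⟨K, hK, hlt⟩ := exists_limit_failureBound_lt (sub_pos.mpr hq')
  refine ⟨20 * (K + 1), ?_⟩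
  filter_upwards [(tendsto_failureBound_hitProb hK).eventually_lt_const hlt,
    eventually_ge_atTop 6] with n hfail hn
  have hone : 1 ≤ (n : ℝ) ^ (9 / 5 : ℝ) :=
    Real.one_le_rpow (by exact_mod_cast (by omega : 1 ≤ n)) (by norm_num)
  set L := ⌈K * (n : ℝ) ^ (9 / 5 : ℝ)⌉₊
  have hL : (L : ℝ) ≤ K * (n : ℝ) ^ (9 / 5 : ℝ) + 1 := (Nat.ceil_lt_add_one (by positivity)).le
  obtain ⟨S, hS⟩ := exists_strategy_probContains_ge (N := n / 6) (n := n) (L := L)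
    (by omega) (by omega) (Nat.ceil_pos.mpr (by positivity))
  refine ⟨20 * L, by push_cast; linarith, tauQ_le (le_trans ?_ hS)⟩
  exact ENNReal.le_ofReal_iff_toReal_le hq.ne_top (by linarith [q.toReal_nonneg]) |>.mpr
    (by linarith)

end Asymptotics

section Exponent

lemma elog_le {x : ℕ∞} {m : ℕ} (h : x ≤ m) : elog x ≤ (Real.log m : EReal) := by
  lift x to ℕ using ne_top_of_le_ne_top (ENat.natCast_ne_top m) h
  change ((Real.log x : ℝ) : EReal) ≤ _
  rw [EReal.coe_le_coe_iff]
  rcases x.eq_zero_or_pos with rfl | hx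
  · simpa using Real.log_natCast_nonneg m
  · exact Real.log_le_log (Nat.cast_pos.mpr hx) (Nat.cast_le.mpr (Nat.cast_le.mp h))

lemma log_natCast_le_add_mul_log {m : ℕ} {x C α : ℝ} (hx : 1 ≤ x) (hα : 0 ≤ α)
    (hm : m ≤ C * x ^ α) : Real.log m ≤ Real.log (max C 1) + α * Real.log x := by
  have hC : 1 ≤ max C 1 := le_max_right _ _
  have hpow : 1 ≤ x ^ α := Real.one_le_rpow hx hα
  have hm' : (m : ℝ) ≤ max C 1 * x ^ α := hm.trans (by gcongr; exact le_max_left _ _)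
  rw [← Real.log_rpow (by positivity), ← Real.log_mul (by positivity) (by positivity)]
  rcases m.eq_zero_or_pos with rfl | hpos
  · simpa using Real.log_nonneg (one_le_mul_of_one_le_of_one_le hC hpow)
  · exact Real.log_le_log (Nat.cast_pos.mpr hpos) hm'

lemma elog_mul_inv_log_le {x : ℕ∞} {m n : ℕ} {C α : ℝ} (hx : x ≤ m) (hn : 1 < n) (hα : 0 ≤ α)
    (hm : m ≤ C * (n : ℝ) ^ α) :
    elog x * (((Real.log n)⁻¹ : ℝ) : EReal) ≤
      ((Real.log (max C 1) * (Real.log n)⁻¹ + α : ℝ) : EReal) := by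
  have hn' : (1 : ℝ) < n := Nat.one_lt_cast.mpr hn
  have hlog : 0 < Real.log n := Real.log_pos hn'
  calc elog x * (((Real.log n)⁻¹ : ℝ) : EReal)
      ≤ (Real.log m : EReal) * (((Real.log n)⁻¹ : ℝ) : EReal) :=
        mul_le_mul_of_nonneg_right (elog_le hx) (EReal.coe_nonneg.mpr (by positivity))
    _ = ((Real.log m * (Real.log n)⁻¹ : ℝ) : EReal) := (EReal.coe_mul _ _).symm
    _ ≤ (((Real.log (max C 1) + α * Real.log n) * (Real.log n)⁻¹ : ℝ) : EReal) := by
        rw [EReal.coe_le_coe_iff]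
        gcongr
        exact log_natCast_le_add_mul_log hn'.le hα hm
    _ = ((Real.log (max C 1) * (Real.log n)⁻¹ + α : ℝ) : EReal) := by
        rw [add_mul, mul_inv_cancel_right₀ hlog.ne']

lemma tauExp_le {V : Type*} {r s : ℕ} {E : Finset (Finset V)} {α : ℝ} (hα : 0 ≤ α)
    (h : ∀ q : ℝ≥0∞, q < 1 → ∃ C : ℝ, ∀ᶠ n : ℕ in atTop, ∃ m : ℕ,
      (m : ℝ) ≤ C * (n : ℝ) ^ α ∧ tauQ r s E q n ≤ m) :
    tauExp r s E ≤ α := by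
  refine iSup₂_le fun q hq ↦ ?_
  obtain ⟨C, hC⟩ := h q hq.2
  have hlim : Tendsto (fun n : ℕ ↦ ((Real.log (max C 1) * (Real.log n)⁻¹ + α : ℝ) : EReal)) atTop
      (𝓝 α) := by
    rw [EReal.tendsto_coe]
    simpa using ((Real.tendsto_log_atTop.comp
      tendsto_natCast_atTop_atTop).inv_tendsto_atTop.const_mul (Real.log (max C 1))).add_const α
  rw [← hlim.limsup_eq]
  refine limsup_le_limsup ?_
  filter_upwards [hC, eventually_gt_atTop 1] with n ⟨m, hm, htau⟩ hn
  exact elog_mul_inv_log_le htau hn hα hm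

end Exponent

end SemiRandomHypergraph

open SemiRandomHypergraph in
/-- **Proposition 10.** For the semi-random hypergraph process with `s = 3`, `r = 2`,
the threshold exponent for creating a copy of the complete `3`-uniform hypergraph
`K_6^{(3)}` on six vertices satisfies `τ^{(2)}_{P_{K_6^{(3)}}} ≤ 9/5`. -/
theorem semiRandom_hypergraph_K6_upper_bound :
    tauExp 2 3
      (Finset.powersetCard 3 (Finset.univ : Finset (Fin 6))) ≤ ((9 / 5 : ℝ) : EReal) := by
  refine tauExp_le (by norm_num) fun q hq ↦ ?_
  exact exists_eventually_tauQ_K6_le hq
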